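/- arXiv:2204.08140 — 4 statements merged into one kernel-verified Lean document; each statement's English description precedes it below -/
import Mathlib

section
/- Let t, W ≥ 2, K ≥ 1 be integers and let real numbers φ_t, φ_{t',k}, δ̄_t, δ̲_t, δ̄_{t',k}, δ̲_{t',k} (for t' ∈ {t+1,…,t+W−1}, k ∈ {1,…,K}) satisfy the stationarity equations: −δ̲_t + δ̄_t + φ_t − Σ_{k=1}^K φ_{t+1,k} = 0; −δ̲_{t',k} + δ̄_{t',k} + φ_{t',k} − φ_{t'+1,k} = 0 for all k and all t' with t+1 ≤ t' ≤ t+W−2; and −δ̲_{t+W−1,k} + δ̄_{t+W−1,k} + φ_{t+W−1,k} = 0 for all k. Suppose moreover the multipliers are nonnegative and satisfy complementary slackness against SOC limits E̲ ≤ E ≤ Ē: δ̄_t(Ē − E_t) = 0, δ̲_t(E_t − E̲) = 0, δ̄_{t',k}(Ē − E_{t',k}) = 0, δ̲_{t',k}(E_{t',k} − E̲) = 0, and the SOC is strictly interior, E̲ < E_t < Ē and E̲ < E_{t',k} < Ē, for all t' ∈ {t+1,…,t+W−1} and all k. Then φ_t = 0. -/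
/-!
STATEMENT 1 (observation following Lemma 1 of the paper).

Same KKT stationarity conditions as in Lemma 1 for the SOC duals of the
scenario-based stochastic rolling-window dispatch (window size `W`, `K`
scenarios).  In addition the SOC-limit multipliers `δu, δl` (and `δut, δlt`
at the binding interval) are nonnegative and satisfy complementary slackness
against the SOC limits `Elo ≤ E ≤ Ehi`, and the SOC values `Et`, `Ev t' k`
are strictly interior.  Then the SOC price `φt` vanishes.
-/
theorem soc_price_zero_of_interior
    (t W K : ℕ) (hW : 2 ≤ W) (hK : 1 ≤ K)
    (φt : ℝ) (φ : ℕ → ℕ → ℝ)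
    (δut δlt : ℝ) (δu δl : ℕ → ℕ → ℝ)
    (Elo Ehi : ℝ) (Et : ℝ) (Ev : ℕ → ℕ → ℝ)
    -- stationarity conditions (as in Lemma 1)
    (h1 : -δlt + δut + φt - ∑ k ∈ Finset.Icc 1 K, φ (t + 1) k = 0)
    (h2 : ∀ k ∈ Finset.Icc 1 K, ∀ t', t + 1 ≤ t' → t' ≤ t + W - 2 →
      -δl t' k + δu t' k + φ t' k - φ (t' + 1) k = 0)
    (h3 : ∀ k ∈ Finset.Icc 1 K,
      -δl (t + W - 1) k + δu (t + W - 1) k + φ (t + W - 1) k = 0)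
    -- nonnegativity of the SOC-limit multipliers
    (hδut : 0 ≤ δut) (hδlt : 0 ≤ δlt)
    (hδu : ∀ t', t + 1 ≤ t' → t' ≤ t + W - 1 → ∀ k ∈ Finset.Icc 1 K, 0 ≤ δu t' k)
    (hδl : ∀ t', t + 1 ≤ t' → t' ≤ t + W - 1 → ∀ k ∈ Finset.Icc 1 K, 0 ≤ δl t' k)
    -- complementary slackness against the SOC limits
    (hcsut : δut * (Ehi - Et) = 0)
    (hcslt : δlt * (Et - Elo) = 0)
    (hcsu : ∀ t', t + 1 ≤ t' → t' ≤ t + W - 1 → ∀ k ∈ Finset.Icc 1 K,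
      δu t' k * (Ehi - Ev t' k) = 0)
    (hcsl : ∀ t', t + 1 ≤ t' → t' ≤ t + W - 1 → ∀ k ∈ Finset.Icc 1 K,
      δl t' k * (Ev t' k - Elo) = 0)
    -- strict interiority of the SOC in the look-ahead window
    (hintt : Elo < Et ∧ Et < Ehi)
    (hint : ∀ t', t + 1 ≤ t' → t' ≤ t + W - 1 → ∀ k ∈ Finset.Icc 1 K,
      Elo < Ev t' k ∧ Ev t' k < Ehi) :
    φt = 0 := by
  have key : ∀ d x : ℝ, d * x = 0 → 0 < x → d = 0 := fun d x h hx =>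
    (mul_eq_zero.mp h).resolve_right hx.ne'
  have hu0 : δut = 0 := key _ _ hcsut (by linarith [hintt.2])
  have hl0 : δlt = 0 := key _ _ hcslt (by linarith [hintt.1])
  have hz : ∀ k ∈ Finset.Icc 1 K, ∀ n t', t + 1 ≤ t' → t' + n = t + W - 1 → φ t' k = 0 := by
    intro k hk n
    induction n with
    | zero =>
      intro t' h ht
      have e : t' = t + W - 1 := by omega
      have hle : t' ≤ t + W - 1 := by omega
      have a := key _ _ (hcsu t' h hle k hk) (by linarith [(hint t' h hle k hk).2])
      have b := key _ _ (hcsl t' h hle k hk) (by linarith [(hint t' h hle k hk).1])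
      have c := h3 k hk
      rw [← e] at c
      linarith
    | succ n ih =>
      intro t' h ht
      have hle : t' ≤ t + W - 1 := by omega
      have a := key _ _ (hcsu t' h hle k hk) (by linarith [(hint t' h hle k hk).2])
      have b := key _ _ (hcsl t' h hle k hk) (by linarith [(hint t' h hle k hk).1])
      have c := h2 k hk t' h (by omega)
      have d := ih (t' + 1) (by omega) (by omega)
      linarith
  have hs : ∑ k ∈ Finset.Icc 1 K, φ (t + 1) k = 0 :=
    Finset.sum_eq_zero fun k hk => hz k hk (W - 2) (t + 1) le_rfl (by omega)
  linarith
end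

section
/- Consider the individual storage profit-maximization problem over the feasible set S with price vector π ∈ ℝ^T. Suppose (g^D, g^C, E) ∈ S maximizes profit(π; ·) over S, and at some interval t the following marginality conditions hold: 0 < g^D_t < ḡ^D; the discharge ramp constraints between intervals t−1 and t and between t and t+1 are strictly nonbinding at (g^D, g^C, E) (for t = T only the constraint between t−1 and t is required); and E̲ < E_{t'} < Ē for all t' ≥ t. Then π_t = (f^D_t)'(g^D_t). Analogously, if 0 < g^C_t < ḡ^C with strictly nonbinding charging ramp constraints around t and E̲ < E_{t'} < Ē for all t' ≥ t, then π_t = (f^C_t)'(g^C_t). -/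
/-- Parameters of a (generalized) energy storage resource (ESR):
discharge/charge efficiencies, initial SOC and initial charge/discharge
levels, ramp limits, SOC limits and capacity limits. -/
structure ESRParams where
  xiD : ℝ
  xiC : ℝ
  hxiD : xiD ∈ Set.Ioc (0 : ℝ) 1
  hxiC : xiC ∈ Set.Ioc (0 : ℝ) 1
  E0 : ℝ
  pD0 : ℝ
  pC0 : ℝ
  rDup : ℝ
  rDdn : ℝ
  rCup : ℝ
  rCdn : ℝ
  hrDup : 0 ≤ rDup
  hrDdn : 0 ≤ rDdn
  hrCup : 0 ≤ rCup
  hrCdn : 0 ≤ rCdn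
  Elo : ℝ
  Ehi : ℝ
  hElim : Elo ≤ Ehi
  gDmax : ℝ
  gCmax : ℝ
  hgD : 0 < gDmax
  hgC : 0 < gCmax

/-- The individual feasible set `S` of the ESR over horizon `T`
(intervals `t = 1, …, T`; index `0` carries the initial conditions):
SOC transition, ramp constraints, SOC limits and capacity limits. -/
def Feasible (T : ℕ) (P : ESRParams) (pD pC e : ℕ → ℝ) : Prop :=
  pD 0 = P.pD0 ∧ pC 0 = P.pC0 ∧ e 0 = P.E0 ∧
  ∀ t ∈ Finset.Icc 1 T,
    e t - e (t - 1) = P.xiC * pC t - pD t / P.xiD ∧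
    -P.rDdn ≤ pD t - pD (t - 1) ∧ pD t - pD (t - 1) ≤ P.rDup ∧
    -P.rCdn ≤ pC t - pC (t - 1) ∧ pC t - pC (t - 1) ≤ P.rCup ∧
    P.Elo ≤ e t ∧ e t ≤ P.Ehi ∧
    0 ≤ pD t ∧ pD t ≤ P.gDmax ∧
    0 ≤ pC t ∧ pC t ≤ P.gCmax

/-- Profit of the ESR under (possibly distinct) discharge/charge price
sequences `piD, piC`, with bid curves `fD` (discharge cost) and `fC`
(charging benefit).  For a uniform price `π`, take `piD = piC = π`. -/
def profit (T : ℕ) (piD piC : ℕ → ℝ) (fD fC : ℕ → ℝ → ℝ)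
    (pD pC : ℕ → ℝ) : ℝ :=
  ∑ t ∈ Finset.Icc 1 T,
    (piD t * pD t - piC t * pC t - fD t (pD t) + fC t (pC t))

/-- The ESR is "marginal" in discharging at interval `t`: discharge strictly
within capacity, discharge ramp constraints strictly nonbinding between
`t-1` and `t` and between `t` and `t+1` (the latter only required when
`t < T`), and SOC strictly interior from `t` to the end of the horizon. -/
def MarginalD (T : ℕ) (P : ESRParams) (gD e : ℕ → ℝ) (t : ℕ) : Prop :=
  0 < gD t ∧ gD t < P.gDmax ∧
  (-P.rDdn < gD t - gD (t - 1) ∧ gD t - gD (t - 1) < P.rDup) ∧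
  (t < T → -P.rDdn < gD (t + 1) - gD t ∧ gD (t + 1) - gD t < P.rDup) ∧
  (∀ t', t ≤ t' → t' ≤ T → P.Elo < e t' ∧ e t' < P.Ehi)

/-- The ESR is "marginal" in charging at interval `t`. -/
def MarginalC (T : ℕ) (P : ESRParams) (gC e : ℕ → ℝ) (t : ℕ) : Prop :=
  0 < gC t ∧ gC t < P.gCmax ∧
  (-P.rCdn < gC t - gC (t - 1) ∧ gC t - gC (t - 1) < P.rCup) ∧
  (t < T → -P.rCdn < gC (t + 1) - gC t ∧ gC (t + 1) - gC t < P.rCup) ∧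
  (∀ t', t ≤ t' → t' ≤ T → P.Elo < e t' ∧ e t' < P.Ehi)

theorem aux_feasD (T : ℕ) (P : ESRParams) (gD gC E : ℕ → ℝ)
    (hfeas : Feasible T P gD gC E) (t : ℕ) (ht1 : 1 ≤ t) (htT : t ≤ T)
    (hm : MarginalD T P gD E t) :
    ∀ᶠ y in nhds (gD t), Feasible T P (Function.update gD t y) gC
      (fun s => if t ≤ s then E s - (y - gD t) / P.xiD else E s) := by
  obtain ⟨h1, h2, ⟨h3, h4⟩, h5, h6⟩ := hm
  obtain ⟨z1, z2, z3, hf⟩ := hfeas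
  have e1 : ∀ᶠ y in nhds (gD t), 0 < y := lt_mem_nhds h1
  have e2 : ∀ᶠ y in nhds (gD t), y < P.gDmax := gt_mem_nhds h2
  have e3 : ∀ᶠ y in nhds (gD t), -P.rDdn < y - gD (t - 1) :=
    ContinuousAt.eventually_lt (by fun_prop) (by fun_prop) h3
  have e4 : ∀ᶠ y in nhds (gD t), y - gD (t - 1) < P.rDup :=
    ContinuousAt.eventually_lt (by fun_prop) (by fun_prop) h4
  have e5 : ∀ᶠ y in nhds (gD t), t < T → -P.rDdn < gD (t + 1) - y ∧ gD (t + 1) - y < P.rDup := by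
    by_cases hT : t < T
    · have a1 : ∀ᶠ y in nhds (gD t), -P.rDdn < gD (t + 1) - y :=
        ContinuousAt.eventually_lt (by fun_prop) (by fun_prop) (h5 hT).1
      have a2 : ∀ᶠ y in nhds (gD t), gD (t + 1) - y < P.rDup :=
        ContinuousAt.eventually_lt (by fun_prop) (by fun_prop) (h5 hT).2
      filter_upwards [a1, a2] with y b1 b2 _ using ⟨b1, b2⟩
    · exact Filter.Eventually.of_forall fun y h => absurd h hT
  have e6 : ∀ᶠ y in nhds (gD t), ∀ s ∈ Finset.Icc t T,
      P.Elo < E s - (y - gD t) / P.xiD ∧ E s - (y - gD t) / P.xiD < P.Ehi := by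
    rw [Filter.eventually_all_finset]
    intro s hs
    rw [Finset.mem_Icc] at hs
    have hE := h6 s hs.1 hs.2
    have a1 : ∀ᶠ y in nhds (gD t), P.Elo < E s - (y - gD t) / P.xiD :=
      ContinuousAt.eventually_lt (by fun_prop) (by fun_prop) (by simpa using hE.1)
    have a2 : ∀ᶠ y in nhds (gD t), E s - (y - gD t) / P.xiD < P.Ehi :=
      ContinuousAt.eventually_lt (by fun_prop) (by fun_prop) (by simpa using hE.2)
    exact a1.and a2
  filter_upwards [e1, e2, e3, e4, e5, e6] with y k1 k2 e3 e4 e5 e6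
  have ht0 : (0 : ℕ) ≠ t := by omega
  have ht0' : ¬ t ≤ 0 := by omega
  refine ⟨by simp [ht0, z1], by simp [ht0, z2], by simp only [if_neg ht0', z3], ?_⟩
  intro s hs
  obtain ⟨f1, f2, f3, f4, f5, f6, f7, f8, f9, f10, f11⟩ := hf s hs
  rw [Finset.mem_Icc] at hs
  rcases lt_trichotomy s t with hst | rfl | hst
  · have n1 : ¬ t ≤ s := by omega
    have n2 : ¬ t ≤ s - 1 := by omega
    have n3 : s ≠ t := by omega
    have n4 : s - 1 ≠ t := by omega
    simp only [if_neg n1, if_neg n2, Function.update_of_ne n3, Function.update_of_ne n4]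
    exact ⟨f1, f2, f3, f4, f5, f6, f7, f8, f9, f10, f11⟩
  · have n2 : ¬ s ≤ s - 1 := by omega
    have n4 : s - 1 ≠ s := by omega
    have e7 := e6 s (Finset.mem_Icc.2 ⟨le_rfl, htT⟩)
    simp only [if_neg n2, le_refl, if_true, Function.update_self, Function.update_of_ne n4]
    refine ⟨?_, e3.le, e4.le, f4, f5, e7.1.le, e7.2.le, k1.le, k2.le, f10, f11⟩
    linear_combination f1
  · have n1 : t ≤ s := by omega
    have n2 : t ≤ s - 1 := by omega
    have n3 : s ≠ t := by omega
    have e7 := e6 s (Finset.mem_Icc.2 ⟨n1, hs.2⟩)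
    simp only [if_pos n1, if_pos n2, Function.update_of_ne n3]
    have r : -P.rDdn ≤ gD s - Function.update gD t y (s - 1) ∧
        gD s - Function.update gD t y (s - 1) ≤ P.rDup := by
      by_cases n4 : s - 1 = t
      · have n5 : s = t + 1 := by omega
        subst n5
        have := e5 (by omega)
        simp only [Nat.add_sub_cancel, Function.update_self]
        exact ⟨this.1.le, this.2.le⟩
      · rw [Function.update_of_ne n4]
        exact ⟨f2, f3⟩
    refine ⟨?_, r.1, r.2, f4, f5, e7.1.le, e7.2.le, f8, f9, f10, f11⟩
    linear_combination f1

theorem aux_profitD (T : ℕ) (π : ℕ → ℝ) (fD fC : ℕ → ℝ → ℝ) (gD gC : ℕ → ℝ)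
    (t : ℕ) (ht1 : 1 ≤ t) (htT : t ≤ T) (y : ℝ) :
    profit T π π fD fC (Function.update gD t y) gC - profit T π π fD fC gD gC
      = (π t * y - fD t y) - (π t * gD t - fD t (gD t)) := by
  unfold profit
  rw [← Finset.sum_sub_distrib, Finset.sum_eq_single t]
  · simp only [Function.update_self]
    ring
  · intro b _ hb
    simp only [Function.update_of_ne hb]
    ring
  · intro h
    exact absurd (Finset.mem_Icc.2 ⟨ht1, htT⟩) h

theorem aux_feasC (T : ℕ) (P : ESRParams) (gD gC E : ℕ → ℝ)
    (hfeas : Feasible T P gD gC E) (t : ℕ) (ht1 : 1 ≤ t) (htT : t ≤ T)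
    (hm : MarginalC T P gC E t) :
    ∀ᶠ y in nhds (gC t), Feasible T P gD (Function.update gC t y)
      (fun s => if t ≤ s then E s + P.xiC * (y - gC t) else E s) := by
  obtain ⟨h1, h2, ⟨h3, h4⟩, h5, h6⟩ := hm
  obtain ⟨z1, z2, z3, hf⟩ := hfeas
  have e1 : ∀ᶠ y in nhds (gC t), 0 < y := lt_mem_nhds h1
  have e2 : ∀ᶠ y in nhds (gC t), y < P.gCmax := gt_mem_nhds h2
  have e3 : ∀ᶠ y in nhds (gC t), -P.rCdn < y - gC (t - 1) :=
    ContinuousAt.eventually_lt (by fun_prop) (by fun_prop) h3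
  have e4 : ∀ᶠ y in nhds (gC t), y - gC (t - 1) < P.rCup :=
    ContinuousAt.eventually_lt (by fun_prop) (by fun_prop) h4
  have e5 : ∀ᶠ y in nhds (gC t), t < T → -P.rCdn < gC (t + 1) - y ∧ gC (t + 1) - y < P.rCup := by
    by_cases hT : t < T
    · have a1 : ∀ᶠ y in nhds (gC t), -P.rCdn < gC (t + 1) - y :=
        ContinuousAt.eventually_lt (by fun_prop) (by fun_prop) (h5 hT).1
      have a2 : ∀ᶠ y in nhds (gC t), gC (t + 1) - y < P.rCup :=
        ContinuousAt.eventually_lt (by fun_prop) (by fun_prop) (h5 hT).2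
      filter_upwards [a1, a2] with y b1 b2 _ using ⟨b1, b2⟩
    · exact Filter.Eventually.of_forall fun y h => absurd h hT
  have e6 : ∀ᶠ y in nhds (gC t), ∀ s ∈ Finset.Icc t T,
      P.Elo < E s + P.xiC * (y - gC t) ∧ E s + P.xiC * (y - gC t) < P.Ehi := by
    rw [Filter.eventually_all_finset]
    intro s hs
    rw [Finset.mem_Icc] at hs
    have hE := h6 s hs.1 hs.2
    have a1 : ∀ᶠ y in nhds (gC t), P.Elo < E s + P.xiC * (y - gC t) :=
      ContinuousAt.eventually_lt (by fun_prop) (by fun_prop) (by simpa using hE.1)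
    have a2 : ∀ᶠ y in nhds (gC t), E s + P.xiC * (y - gC t) < P.Ehi :=
      ContinuousAt.eventually_lt (by fun_prop) (by fun_prop) (by simpa using hE.2)
    exact a1.and a2
  filter_upwards [e1, e2, e3, e4, e5, e6] with y k1 k2 e3 e4 e5 e6
  have ht0 : (0 : ℕ) ≠ t := by omega
  have ht0' : ¬ t ≤ 0 := by omega
  refine ⟨by simp [ht0, z1], by simp [ht0, z2], by simp only [if_neg ht0', z3], ?_⟩
  intro s hs
  obtain ⟨f1, f2, f3, f4, f5, f6, f7, f8, f9, f10, f11⟩ := hf s hs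
  rw [Finset.mem_Icc] at hs
  rcases lt_trichotomy s t with hst | rfl | hst
  · have n1 : ¬ t ≤ s := by omega
    have n2 : ¬ t ≤ s - 1 := by omega
    have n3 : s ≠ t := by omega
    have n4 : s - 1 ≠ t := by omega
    simp only [if_neg n1, if_neg n2, Function.update_of_ne n3, Function.update_of_ne n4]
    exact ⟨f1, f2, f3, f4, f5, f6, f7, f8, f9, f10, f11⟩
  · have n2 : ¬ s ≤ s - 1 := by omega
    have n4 : s - 1 ≠ s := by omega
    have e7 := e6 s (Finset.mem_Icc.2 ⟨le_rfl, htT⟩)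
    simp only [if_neg n2, le_refl, if_true, Function.update_self, Function.update_of_ne n4]
    refine ⟨?_, f2, f3, e3.le, e4.le, e7.1.le, e7.2.le, f8, f9, k1.le, k2.le⟩
    linear_combination f1
  · have n1 : t ≤ s := by omega
    have n2 : t ≤ s - 1 := by omega
    have n3 : s ≠ t := by omega
    have e7 := e6 s (Finset.mem_Icc.2 ⟨n1, hs.2⟩)
    simp only [if_pos n1, if_pos n2, Function.update_of_ne n3]
    have r : -P.rCdn ≤ gC s - Function.update gC t y (s - 1) ∧
        gC s - Function.update gC t y (s - 1) ≤ P.rCup := by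
      by_cases n4 : s - 1 = t
      · have n5 : s = t + 1 := by omega
        subst n5
        have := e5 (by omega)
        simp only [Nat.add_sub_cancel, Function.update_self]
        exact ⟨this.1.le, this.2.le⟩
      · rw [Function.update_of_ne n4]
        exact ⟨f4, f5⟩
    refine ⟨?_, f2, f3, r.1, r.2, e7.1.le, e7.2.le, f8, f9, f10, f11⟩
    linear_combination f1

theorem aux_profitC (T : ℕ) (π : ℕ → ℝ) (fD fC : ℕ → ℝ → ℝ) (gD gC : ℕ → ℝ)
    (t : ℕ) (ht1 : 1 ≤ t) (htT : t ≤ T) (y : ℝ) :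
    profit T π π fD fC gD (Function.update gC t y) - profit T π π fD fC gD gC
      = (fC t y - π t * y) - (fC t (gC t) - π t * gC t) := by
  unfold profit
  rw [← Finset.sum_sub_distrib, Finset.sum_eq_single t]
  · simp only [Function.update_self]
    ring
  · intro b _ hb
    simp only [Function.update_of_ne hb]
    ring
  · intro h
    exact absurd (Finset.mem_Icc.2 ⟨ht1, htT⟩) h

/-!
STATEMENT 3.

If `(gD, gC, E) ∈ S` maximizes `profit(π; ·)` over `S` and the ESR is
marginal (in the discharge resp. charge direction) at interval `t`, then the
uniform price equals the marginal bid-in cost: `π t = (fD t)'(gD t)`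
(resp. `π t = (fC t)'(gC t)`). -/
theorem uniform_price_eq_marginal_cost_at_marginal_interval
    (T : ℕ) (P : ESRParams) (π : ℕ → ℝ) (fD fC : ℕ → ℝ → ℝ)
    (hfDconv : ∀ t, ConvexOn ℝ Set.univ (fD t))
    (hfDdiff : ∀ t, Differentiable ℝ (fD t))
    (hfCconc : ∀ t, ConcaveOn ℝ Set.univ (fC t))
    (hfCdiff : ∀ t, Differentiable ℝ (fC t))
    (gD gC E : ℕ → ℝ)
    (hfeas : Feasible T P gD gC E)
    (hopt : ∀ pD pC e, Feasible T P pD pC e →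
      profit T π π fD fC pD pC ≤ profit T π π fD fC gD gC)
    (t : ℕ) (ht1 : 1 ≤ t) (htT : t ≤ T) :
    (MarginalD T P gD E t → π t = deriv (fD t) (gD t)) ∧
    (MarginalC T P gC E t → π t = deriv (fC t) (gC t)) := by
  constructor
  · intro hm
    have hl : IsLocalMax (fun y => π t * y - fD t y) (gD t) := by
      filter_upwards [aux_feasD T P gD gC E hfeas t ht1 htT hm] with y hy
      have h1 := hopt _ _ _ hy
      have h2 := aux_profitD T π fD fC gD gC t ht1 htT y
      linarith
    have hd := hl.hasDerivAt_eq_zero (((hasDerivAt_id (gD t)).const_mul (π t)).sub (hfDdiff t (gD t)).hasDerivAt)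
    linarith
  · intro hm
    have hl : IsLocalMax (fun y => fC t y - π t * y) (gC t) := by
      filter_upwards [aux_feasC T P gD gC E hfeas t ht1 htT hm] with y hy
      have h1 := hopt _ _ _ hy
      have h2 := aux_profitC T π fD fC gD gC t ht1 htT y
      linarith
    have hd := hl.hasDerivAt_eq_zero ((hfCdiff t (gC t)).hasDerivAt.sub ((hasDerivAt_id (gC t)).const_mul (π t)))
    linarith
end

section
/- Let (g^D, g^C, E) ∈ S be the rolling-window dispatch of an ESR, and suppose for every t ∈ {1,…,T} there exist real numbers λ_t (energy price), φ_t (SOC price), Δ^D_t, Δ^C_t (ramping prices), and nonnegative multipliers ρ̄^D_t, ρ̲^D_t, ρ̄^C_t, ρ̲^C_t satisfying the binding-interval stationarity conditions of the stochastic rolling-window dispatch: (f^D_t)'(g^D_t) − λ_t + (1/ξ^D) φ_t − Δ^D_t + ρ̄^D_t − ρ̲^D_t = 0 and −(f^C_t)'(g^C_t) + λ_t − ξ^C φ_t − Δ^C_t + ρ̄^C_t − ρ̲^C_t = 0, together with complementary slackness ρ̄^D_t(ḡ^D − g^D_t) = 0, ρ̲^D_t g^D_t = 0, ρ̄^C_t(ḡ^C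 − g^C_t) = 0, ρ̲^C_t g^C_t = 0. Define the temporal locational marginal prices π^{TLMP-D}_t = λ_t − (1/ξ^D) φ_t + Δ^D_t and π^{TLMP-C}_t = λ_t − ξ^C φ_t − Δ^C_t. Then the lost opportunity cost of the dispatch under TLMP is zero: profit(π^{TLMP-D}, π^{TLMP-C}; g^D, g^C) = Q(π^{TLMP-D}, π^{TLMP-C}) = sup_{(p^D,p^C,e) ∈ S} profit(π^{TLMP-D}, π^{TLMP-C}; p^D, p^C), so LOC(π^{TLMP}) = 0. -/
/-- The set of profits attainable over the feasible set `S`. -/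
def profitSet (T : ℕ) (P : ESRParams) (piD piC : ℕ → ℝ)
    (fD fC : ℕ → ℝ → ℝ) : Set ℝ :=
  {x | ∃ pD pC e, Feasible T P pD pC e ∧ x = profit T piD piC fD fC pD pC}

/-- `Q(πD, πC) = sup` of the profit over the feasible set `S`. -/
noncomputable def Qmax (T : ℕ) (P : ESRParams) (piD piC : ℕ → ℝ)
    (fD fC : ℕ → ℝ → ℝ) : ℝ :=
  sSup (profitSet T P piD piC fD fC)

/-- Lost opportunity cost of a dispatch: `LOC = Q − profit`. -/
noncomputable def LOC (T : ℕ) (P : ESRParams) (piD piC : ℕ → ℝ)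
    (fD fC : ℕ → ℝ → ℝ) (pD pC : ℕ → ℝ) : ℝ :=
  Qmax T P piD piC fD fC - profit T piD piC fD fC pD pC

theorem tangent_aux (f : ℝ → ℝ) (hc : ConvexOn ℝ Set.univ f) (hd : Differentiable ℝ f)
    (x y : ℝ) : f x + deriv f x * (y - x) ≤ f y := by
  rcases lt_trichotomy x y with h | h | h
  · have := hc.le_slope_of_hasDerivAt (Set.mem_univ x) (Set.mem_univ y) h (hd x).hasDerivAt
    rw [slope_def_field, le_div_iff₀ (by linarith)] at this
    linarith
  · subst h; simp
  · have := hc.slope_le_of_hasDerivAt (Set.mem_univ y) (Set.mem_univ x) h (hd x).hasDerivAt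
    rw [slope_def_field, div_le_iff₀ (by linarith)] at this
    linarith

/-!
STATEMENT 7 (Theorem 2 of the paper: dispatch-following incentive
compatibility of TLMP).

The rolling-window dispatch `(gD, gC, E) ∈ S` satisfies, in every binding
interval `t`, the KKT stationarity conditions of the stochastic
rolling-window dispatch, in which `lam t` is the dual of the power balance
constraint (LMP), `φ t` the dual of the SOC transition equation,
`ΔD t, ΔC t` the net ramping dual differences, and `ρ…` the nonnegative
capacity-bound duals with complementary slackness.  Under the TLMP prices
`πD t = λ t − φ t / ξ^D + ΔD t`, `πC t = λ t − ξ^C φ t − ΔC t`, the dispatch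
attains the maximum individual profit, so its lost opportunity cost is
zero. -/
theorem tlmp_zero_LOC
    (T : ℕ) (P : ESRParams) (fD fC : ℕ → ℝ → ℝ)
    (hfDconv : ∀ t, ConvexOn ℝ Set.univ (fD t))
    (hfDdiff : ∀ t, Differentiable ℝ (fD t))
    (hfCconc : ∀ t, ConcaveOn ℝ Set.univ (fC t))
    (hfCdiff : ∀ t, Differentiable ℝ (fC t))
    (gD gC E : ℕ → ℝ)
    (hfeas : Feasible T P gD gC E)
    -- energy price, SOC price, ramping prices
    (lam φ ΔD ΔC : ℕ → ℝ)
    -- capacity-bound multipliers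
    (ρDu ρDl ρCu ρCl : ℕ → ℝ)
    (hρDu : ∀ t, 0 ≤ ρDu t) (hρDl : ∀ t, 0 ≤ ρDl t)
    (hρCu : ∀ t, 0 ≤ ρCu t) (hρCl : ∀ t, 0 ≤ ρCl t)
    -- binding-interval stationarity conditions
    (hstD : ∀ t ∈ Finset.Icc 1 T,
      deriv (fD t) (gD t) - lam t + φ t / P.xiD - ΔD t + ρDu t - ρDl t = 0)
    (hstC : ∀ t ∈ Finset.Icc 1 T,
      -deriv (fC t) (gC t) + lam t - P.xiC * φ t - ΔC t + ρCu t - ρCl t = 0)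
    -- complementary slackness
    (hcsDu : ∀ t ∈ Finset.Icc 1 T, ρDu t * (P.gDmax - gD t) = 0)
    (hcsDl : ∀ t ∈ Finset.Icc 1 T, ρDl t * gD t = 0)
    (hcsCu : ∀ t ∈ Finset.Icc 1 T, ρCu t * (P.gCmax - gC t) = 0)
    (hcsCl : ∀ t ∈ Finset.Icc 1 T, ρCl t * gC t = 0)
    -- the temporal locational marginal prices
    (piD piC : ℕ → ℝ)
    (hpiD : ∀ t, piD t = lam t - φ t / P.xiD + ΔD t)
    (hpiC : ∀ t, piC t = lam t - P.xiC * φ t - ΔC t) :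
    profit T piD piC fD fC gD gC = Qmax T P piD piC fD fC ∧
    LOC T P piD piC fD fC gD gC = 0 := by
  have key : ∀ pD pC e, Feasible T P pD pC e →
      profit T piD piC fD fC pD pC ≤ profit T piD piC fD fC gD gC := by
    intro pD pC e hp
    unfold profit
    apply Finset.sum_le_sum
    intro t ht
    obtain ⟨-, -, -, -, -, -, -, hD0, hD1, hC0, hC1⟩ := hp.2.2.2 t ht
    have h1 := tangent_aux (fD t) (hfDconv t) (hfDdiff t) (gD t) (pD t)
    have h2 := tangent_aux (-(fC t)) (hfCconc t).neg (hfCdiff t).neg (gC t) (pC t)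
    rw [deriv.neg] at h2
    simp only [Pi.neg_apply] at h2
    have e1 : piD t = deriv (fD t) (gD t) + ρDu t - ρDl t := by
      linarith [hpiD t, hstD t ht]
    have e2 : piC t = deriv (fC t) (gC t) - ρCu t + ρCl t := by
      linarith [hpiC t, hstC t ht]
    have a1 := mul_nonneg (hρDu t) (sub_nonneg.2 hD1)
    have a2 := mul_nonneg (hρDl t) hD0
    have a3 := mul_nonneg (hρCu t) (sub_nonneg.2 hC1)
    have a4 := mul_nonneg (hρCl t) hC0
    have c1 := hcsDu t ht
    have c2 := hcsDl t ht
    have c3 := hcsCu t ht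
    have c4 := hcsCl t ht
    rw [e1, e2]
    linarith
  have hQ : profit T piD piC fD fC gD gC = Qmax T P piD piC fD fC := by
    symm
    apply IsGreatest.csSup_eq
    refine ⟨⟨gD, gC, E, hfeas, rfl⟩, ?_⟩
    rintro x ⟨pD, pC, e, hp, rfl⟩
    exact key pD pC e hp
  exact ⟨hQ, by unfold LOC; rw [hQ, sub_self]⟩
end

section
/- Fix discharge and charge price sequences π^D, π^C ∈ ℝ^T (the price-taking assumption: these TLMP prices do not depend on the ESR's bid). Let q^D_t : ℝ → ℝ be the true convex differentiable discharge cost curves and q^C_t : ℝ → ℝ the true concave differentiable charging benefit curves, and let S* be the truthful feasible set defined by the ESR's true ramp limits, SOC limits, capacity limits, efficiencies and initial conditions. Suppose the dispatch (g^{D*}, g^{C*}, E^*) ∈ S* obtained under truthful bidding satisfies, with the true curves q^D, q^C, the KKT conditions: for every t there exist nonnegative multipliers ρ̄^D_t, ρ̲^D_t, ρ̄^C_t, ρ̲^C_t with complementary slackness ρ̄^D_t(ḡ^D − g^{D*}_t) = 0, ρ̲^D_t g^{D*}_t = 0, ρ̄^C_t(ḡ^C − g^{C*}_t) = 0, ρ̲^C_t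 g^{C*}_t = 0 and stationarity (q^D_t)'(g^{D*}_t) − π^D_t + ρ̄^D_t − ρ̲^D_t = 0, −(q^C_t)'(g^{C*}_t) + π^C_t + ρ̄^C_t − ρ̲^C_t = 0. Then for every alternative dispatch (g^D, g^C, E) ∈ S* (in particular the dispatch induced by any untruthful bidding parameter θ, which the ESR expects to lie in its truthful feasible region), the true price-taking profit satisfies Σ_{t=1}^T (π^D_t g^D_t − π^C_t g^C_t − q^D_t(g^D_t) + q^C_t(g^C_t)) ≤ Σ_{t=1}^T (π^D_t g^{D*}_t − π^C_t g^{C*}_t − q^D_t(g^{D*}_t) + q^C_t(g^{C*}_t)); i.e., under TLMP it is optimal for a price-taking ESR to bid truthfully. -/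
theorem convex_tangent_le {f : ℝ → ℝ} (hc : ConvexOn ℝ Set.univ f)
    (hd : Differentiable ℝ f) (x y : ℝ) : f x + deriv f x * (y - x) ≤ f y := by
  rcases lt_trichotomy x y with h | h | h
  · have := hc.deriv_le_slope (Set.mem_univ x) (Set.mem_univ y) h (hd x)
    rw [slope_def_field, le_div_iff₀ (by linarith)] at this
    linarith
  · subst h; simp
  · have := hc.slope_le_deriv (Set.mem_univ y) (Set.mem_univ x) h (hd x)
    rw [slope_def_field, div_le_iff₀ (by linarith)] at this
    linarith

/-!
STATEMENT 8 (Theorem 3 of the paper: truthful-bidding incentive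
compatibility of TLMP).

Fixed TLMP discharge/charge prices `piD, piC` (price-taking assumption:
they do not depend on the ESR's bid); `qD, qC` are the true discharge cost
and charging benefit curves, and `Feasible T P` is the ESR's truthful
feasible set `S*`.  If the dispatch `(gDstar, gCstar, Estar) ∈ S*` obtained
under truthful bidding satisfies the KKT conditions with the true curves,
then its true price-taking profit dominates the profit of the dispatch
induced by any (possibly untruthful) bid, which the ESR expects to lie in
its truthful feasible region: truthful bidding is optimal. -/
theorem tlmp_truthful_bidding_optimal
    (T : ℕ) (P : ESRParams) (piD piC : ℕ → ℝ) (qD qC : ℕ → ℝ → ℝ)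
    (hqDconv : ∀ t, ConvexOn ℝ Set.univ (qD t))
    (hqDdiff : ∀ t, Differentiable ℝ (qD t))
    (hqCconc : ∀ t, ConcaveOn ℝ Set.univ (qC t))
    (hqCdiff : ∀ t, Differentiable ℝ (qC t))
    -- the dispatch obtained under truthful bidding
    (gDstar gCstar Estar : ℕ → ℝ)
    (hfeas : Feasible T P gDstar gCstar Estar)
    -- capacity-bound multipliers
    (ρDu ρDl ρCu ρCl : ℕ → ℝ)
    (hρDu : ∀ t, 0 ≤ ρDu t) (hρDl : ∀ t, 0 ≤ ρDl t)
    (hρCu : ∀ t, 0 ≤ ρCu t) (hρCl : ∀ t, 0 ≤ ρCl t)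
    -- complementary slackness
    (hcsDu : ∀ t ∈ Finset.Icc 1 T, ρDu t * (P.gDmax - gDstar t) = 0)
    (hcsDl : ∀ t ∈ Finset.Icc 1 T, ρDl t * gDstar t = 0)
    (hcsCu : ∀ t ∈ Finset.Icc 1 T, ρCu t * (P.gCmax - gCstar t) = 0)
    (hcsCl : ∀ t ∈ Finset.Icc 1 T, ρCl t * gCstar t = 0)
    -- stationarity with the true curves
    (hstD : ∀ t ∈ Finset.Icc 1 T,
      deriv (qD t) (gDstar t) - piD t + ρDu t - ρDl t = 0)
    (hstC : ∀ t ∈ Finset.Icc 1 T,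
      -deriv (qC t) (gCstar t) + piC t + ρCu t - ρCl t = 0) :
    -- any alternative dispatch in the truthful feasible region (in
    -- particular the dispatch induced by any untruthful bid θ) yields no
    -- larger true price-taking profit
    ∀ gD gC E : ℕ → ℝ, Feasible T P gD gC E →
      ∑ t ∈ Finset.Icc 1 T,
          (piD t * gD t - piC t * gC t - qD t (gD t) + qC t (gC t)) ≤
      ∑ t ∈ Finset.Icc 1 T,
          (piD t * gDstar t - piC t * gCstar t
            - qD t (gDstar t) + qC t (gCstar t)) := by
  intro gD gC E hf
  apply Finset.sum_le_sum
  intro t ht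
  obtain ⟨_, _, _, h⟩ := hf
  obtain ⟨_, _, _, _, _, _, _, a1, a2, a3, a4⟩ := h t ht
  have k1 := convex_tangent_le (hqDconv t) (hqDdiff t) (gDstar t) (gD t)
  have k2 := convex_tangent_le (hqCconc t).neg (hqCdiff t).neg (gCstar t) (gC t)
  rw [deriv.neg] at k2
  simp only [Pi.neg_apply] at k2
  have e1 : deriv (qD t) (gDstar t) = piD t - ρDu t + ρDl t := by linarith [hstD t ht]
  have e2 : deriv (qC t) (gCstar t) = piC t + ρCu t - ρCl t := by linarith [hstC t ht]
  rw [e1] at k1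
  rw [e2] at k2
  have m1 := mul_nonneg (hρDu t) (sub_nonneg.2 a2)
  have m2 := mul_nonneg (hρDl t) a1
  have m3 := mul_nonneg (hρCu t) (sub_nonneg.2 a4)
  have m4 := mul_nonneg (hρCl t) a3
  have c1 := hcsDu t ht
  have c2 := hcsDl t ht
  have c3 := hcsCu t ht
  have c4 := hcsCl t ht
  linarith
end
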